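/- Let I, J ≥ 3, α, β ∈ ℝ, and ε_k, η_k, γ_k ∈ ℝ with s_k := 1+2ε_k+γ_k (k = 1,2). Define R₁(2) = s₁ and R₁(i) = s₁ + (η₁²−ε₁²)/R₁(i−1) for 3 ≤ i ≤ I−1, and R₂(J−1) = s₂ and R₂(j) = s₂ + (η₂²−ε₂²)/R₂(j+1) for 2 ≤ j ≤ J−2; assume R₁(i) ≠ 0 for 2 ≤ i ≤ I−1, R₂(j) ≠ 0 for 2 ≤ j ≤ J−1, (α+1)R₁(I−1) + (η₁−ε₁) ≠ 0, and (β−1)R₂(2) + (η₂+ε₂) ≠ 0. Suppose the error sequences e₁^m ∈ ℝ^I, e₂^m ∈ ℝ^J satisfy, for every m ≥ 1: e₁^m_1 = 0 and e₂^m_J = 0; −(η₁+ε₁)e₁^m_{i−1} + s₁ e₁^m_i + (η₁−ε₁)e₁^m_{i+1} = 0 for 2 ≤ i ≤ I−1; −(η₂+ε₂)e₂^m_{j−1} + s₂ e₂^m_j + (η₂−ε₂)e₂^m_{j+1} = 0 for 2 ≤ j ≤ J−1; and the optimized interface conditions (e₁^m_I − e₁^m_{I−1}) + α e₁^m_I =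 (e₂^{m−1}_2 − e₂^{m−1}_1) + α e₂^{m−1}_2 and (e₂^m_2 − e₂^m_1) + β e₂^m_1 = (e₁^{m−1}_I − e₁^{m−1}_{I−1}) + β e₁^{m−1}_{I−1}. Then, with ρ̄ := −[((α+1)(η₂+ε₂) − R₂(2))·((β−1)(η₁−ε₁) − R₁(I−1))] / [((α+1)R₁(I−1) + (η₁−ε₁))·((β−1)R₂(2) + (η₂+ε₂))], for every m ≥ 1 one has e₁^{m+2}_i = ρ̄·e₁^m_i for all 1 ≤ i ≤ I and e₂^{m+2}_j = ρ̄·e₂^m_j for all 1 ≤ j ≤ J. -/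

import Mathlib

/-!
Eliminating from the outer Dirichlet end reduces the homogeneous scheme on a subdomain to a single
relation `r • x + u • y = 0` between the values `x, y` at the two interface nodes, where `r` is the
last pivot. Any two linear interface data `c • x + d • y` are therefore proportional, with
coefficients `d * r - c * u`. Following the data through one solve on each subdomain multiplies
them by `ρ`; since the scheme with zero interface data has only the zero solution, the whole error
vector is multiplied by `ρ`. Reflecting the second grid puts both subdomains in the same form.
-/

/-- The homogeneous three-point scheme on one subdomain, with nodes `0, …, n + 2`. Node `0` carries
the outer Dirichlet condition, nodes `n + 1` and `n + 2` lie in the overlap; `lower` is the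
coefficient of the neighbour on the Dirichlet side. -/
structure Subdomain (K : Type*) where
  lower : K
  diag : K
  upper : K
  n : ℕ

namespace Subdomain

variable {K V : Type*} [Field K] [AddCommGroup V] [Module K V] (S T : Subdomain K)

/-- The pivots of Gaussian elimination (Thomas algorithm) started at the Dirichlet end; `pivot i`
belongs to node `i + 1`. -/
def pivot : ℕ → K
  | 0 => S.diag
  | i + 1 => S.diag - S.lower * S.upper / pivot i

/-- The solutions of the homogeneous scheme with zero Dirichlet value. They are encoded as
sequences on `ℕ` whose values beyond node `n + 2` are unconstrained. -/
def solutions (V : Type*) [AddCommGroup V] [Module K V] : Submodule K (ℕ → V) where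
  carrier := {v | v 0 = 0 ∧
    ∀ i ≤ S.n, S.lower • v i + S.diag • v (i + 1) + S.upper • v (i + 2) = 0}
  zero_mem' := by simp
  add_mem' := by
    rintro v w ⟨hv₀, hv⟩ ⟨hw₀, hw⟩
    refine ⟨by simp [hv₀, hw₀], fun i hi ↦ ?_⟩
    simp only [Pi.add_apply]
    linear_combination (norm := module) hv i hi + hw i hi
  smul_mem' := by
    rintro a v ⟨hv₀, hv⟩
    refine ⟨by simp [hv₀], fun i hi ↦ ?_⟩
    simp only [Pi.smul_apply]
    linear_combination (norm := module) a • hv i hi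

/-- The interface datum with coefficients `b` at the nodes `n + 1` and `n + 2`. -/
def trace (b : K × K) : (ℕ → V) →ₗ[K] V :=
  b.1 • LinearMap.proj (S.n + 1) + b.2 • LinearMap.proj (S.n + 2)

/-- The value of the interface datum `b` on the solution `(-upper, pivot n)` of the eliminated
equation `pivot n * x + upper * y = 0` at the interface. -/
def symbol (b : K × K) : K :=
  b.2 * S.pivot S.n - b.1 * S.upper

theorem trace_apply (b : K × K) (v : ℕ → V) :
    S.trace b v = b.1 • v (S.n + 1) + b.2 • v (S.n + 2) := rfl

variable {S T}

theorem eq_pivot {r : ℕ → K} (h_zero : r 0 = S.diag)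
    (h_succ : ∀ i < S.n, r (i + 1) = S.diag - S.lower * S.upper / r i) {i : ℕ} (hi : i ≤ S.n) :
    r i = S.pivot i := by
  induction i with
  | zero => exact h_zero
  | succ i ih => rw [h_succ i hi, ih (by lia), pivot]

theorem pivot_smul_add_upper_smul_eq_zero (hS : ∀ i < S.n, S.pivot i ≠ 0) {v : ℕ → V}
    (hv : v ∈ S.solutions V) {i : ℕ} (hi : i ≤ S.n) :
    S.pivot i • v (i + 1) + S.upper • v (i + 2) = 0 := by
  obtain ⟨hv₀, hv⟩ := hv
  induction i with
  | zero => simpa [hv₀, pivot] using hv 0 hi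
  | succ i ih =>
    have eliminated : v (i + 1) = -(S.upper / S.pivot i) • v (i + 2) := by
      rw [neg_smul, div_eq_inv_mul, mul_smul, ← smul_neg,
        ← eq_neg_of_add_eq_zero_left (ih (by lia)), inv_smul_smul₀ (hS i hi)]
    have scheme := hv (i + 1) hi
    rw [eliminated] at scheme
    rw [pivot]
    linear_combination (norm := module) scheme

theorem symbol_smul_trace (hS : ∀ i < S.n, S.pivot i ≠ 0) {v : ℕ → V} (hv : v ∈ S.solutions V)
    (b c : K × K) : S.symbol b • S.trace c v = S.symbol c • S.trace b v := by
  simp only [symbol, trace_apply]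
  linear_combination (norm := module)
    (c.1 * b.2 - b.1 * c.2) • pivot_smul_add_upper_smul_eq_zero hS hv le_rfl

theorem eq_zero_of_trace_eq_zero (hS : ∀ i < S.n, S.pivot i ≠ 0) {v : ℕ → V}
    (hv : v ∈ S.solutions V) {b : K × K} (hb : S.symbol b ≠ 0) (h : S.trace b v = 0)
    {i : ℕ} (hi : i ≤ S.n + 2) : v i = 0 := by
  have trace_eq_zero (c : K × K) : S.trace c v = 0 := by
    have := symbol_smul_trace hS hv b c
    rwa [h, smul_zero, smul_eq_zero_iff_right hb] at this
  have last : v (S.n + 2) = 0 := by simpa [trace_apply] using trace_eq_zero (0, 1)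
  have penultimate : v (S.n + 1) = 0 := by simpa [trace_apply] using trace_eq_zero (1, 0)
  obtain rfl | hi := hi.eq_or_lt
  · exact last
  induction Nat.le_of_lt_succ hi using Nat.decreasingInduction with
  | self => exact penultimate
  | of_succ k hk ih =>
    cases k with
    | zero => exact hv.1
    | succ k =>
      have := pivot_smul_add_upper_smul_eq_zero hS hv (i := k) (by lia)
      rwa [ih (by lia) (by lia), smul_zero, add_zero,
        smul_eq_zero_iff_right (hS k (by lia))] at this

/-- In two Schwarz iterations `v` on `S` is followed by `w` on `T`, and `w` by `v'` on `S`. The data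
`bS`, `bT` are imposed on a subdomain, the data `cS`, `cT` are passed on to the other one. -/
theorem eq_smul_of_two_solves (hS : ∀ i < S.n, S.pivot i ≠ 0) (hT : ∀ i < T.n, T.pivot i ≠ 0)
    {bS cS bT cT : K × K} (hbS : S.symbol bS ≠ 0) (hbT : T.symbol bT ≠ 0) {v v' w : ℕ → V}
    (hv : v ∈ S.solutions V) (hw : w ∈ T.solutions V) (hv' : v' ∈ S.solutions V)
    (hvw : T.trace bT w = S.trace cS v) (hwv' : S.trace bS v' = T.trace cT w)
    {i : ℕ} (hi : i ≤ S.n + 2) :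
    v' i = (S.symbol cS * T.symbol cT / (S.symbol bS * T.symbol bT)) • v i := by
  set ρ := S.symbol cS * T.symbol cT / (S.symbol bS * T.symbol bT)
  have transfer : (S.symbol bS * T.symbol bT) • S.trace bS v'
      = (S.symbol cS * T.symbol cT) • S.trace bS v := calc
    _ = S.symbol bS • T.symbol bT • T.trace cT w := by rw [hwv', mul_smul]
    _ = T.symbol cT • S.symbol bS • S.trace cS v := by
      rw [symbol_smul_trace hT hw, hvw, smul_comm]
    _ = (S.symbol cS * T.symbol cT) • S.trace bS v := by
      rw [symbol_smul_trace hS hv, smul_smul, mul_comm]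
  have trace_sub : S.trace bS (v' - ρ • v) = 0 := by
    rw [map_sub, map_smul, sub_eq_zero, ← smul_right_inj (mul_ne_zero hbS hbT), transfer,
      smul_smul, mul_div_cancel₀ _ (mul_ne_zero hbS hbT)]
  exact sub_eq_zero.1 <| eq_zero_of_trace_eq_zero hS
    (sub_mem hv' (Submodule.smul_mem _ ρ hv)) hbS trace_sub hi

/-- The first grid: its node `i + 1` is node `i` of the subdomain. -/
def left (η ε s : K) (I : ℕ) : Subdomain K := ⟨-(η + ε), s, η - ε, I - 3⟩

/-- The second grid, reflected: its node `J - j` is node `j` of the subdomain. -/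
def right (η ε s : K) (J : ℕ) : Subdomain K := ⟨η - ε, s, -(η + ε), J - 3⟩

variable {η ε s : K}

theorem pivot_left {I : ℕ} {R : ℕ → K} (hbase : R 2 = s)
    (hrec : ∀ i, 3 ≤ i → i ≤ I - 1 → R i = s + (η ^ 2 - ε ^ 2) / R (i - 1))
    {i : ℕ} (hi : i ≤ I - 3) : (left η ε s I).pivot i = R (i + 2) := by
  refine (eq_pivot (r := fun i ↦ R (i + 2)) hbase (fun i hi ↦ ?_) hi).symm
  simp only [left] at hi ⊢
  rw [hrec (i + 1 + 2) (by lia) (by lia), show i + 1 + 2 - 1 = i + 2 by lia]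
  ring

theorem pivot_right {J : ℕ} {R : ℕ → K} (hbase : R (J - 1) = s)
    (hrec : ∀ j, 2 ≤ j → j ≤ J - 2 → R j = s + (η ^ 2 - ε ^ 2) / R (j + 1))
    {j : ℕ} (hj : j ≤ J - 3) : (right η ε s J).pivot j = R (J - 1 - j) := by
  refine (eq_pivot (r := fun j ↦ R (J - 1 - j)) hbase (fun j hj ↦ ?_) hj).symm
  simp only [right] at hj ⊢
  rw [hrec (J - 1 - (j + 1)) (by lia) (by lia), show J - 1 - (j + 1) + 1 = J - 1 - j by lia]
  ring

theorem pivot_left_ne_zero {I : ℕ} {R : ℕ → K} (hbase : R 2 = s)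
    (hrec : ∀ i, 3 ≤ i → i ≤ I - 1 → R i = s + (η ^ 2 - ε ^ 2) / R (i - 1))
    (hne : ∀ i, 2 ≤ i → i ≤ I - 2 → R i ≠ 0) {i : ℕ} (hi : i < I - 3) :
    (left η ε s I).pivot i ≠ 0 := by
  rw [pivot_left hbase hrec hi.le]
  exact hne _ (by lia) (by lia)

theorem pivot_right_ne_zero {J : ℕ} {R : ℕ → K} (hbase : R (J - 1) = s)
    (hrec : ∀ j, 2 ≤ j → j ≤ J - 2 → R j = s + (η ^ 2 - ε ^ 2) / R (j + 1))
    (hne : ∀ j, 3 ≤ j → j ≤ J - 1 → R j ≠ 0) {j : ℕ} (hj : j < J - 3) :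
    (right η ε s J).pivot j ≠ 0 := by
  rw [pivot_right hbase hrec hj.le]
  exact hne _ (by lia) (by lia)

theorem shift_mem_solutions_left {I : ℕ} (hI : 3 ≤ I) {e : ℕ → V} (hb : e 1 = 0)
    (heq : ∀ i, 2 ≤ i → i ≤ I - 1 →
      -(η + ε) • e (i - 1) + s • e i + (η - ε) • e (i + 1) = 0) :
    (fun i ↦ e (i + 1)) ∈ (left η ε s I).solutions V := by
  refine ⟨hb, fun i hi ↦ heq (i + 2) (by lia) ?_⟩
  simp only [left] at hi
  lia

theorem reflect_mem_solutions_right {J : ℕ} (hJ : 3 ≤ J) {e : ℕ → V} (hb : e J = 0)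
    (heq : ∀ j, 2 ≤ j → j ≤ J - 1 →
      -(η + ε) • e (j - 1) + s • e j + (η - ε) • e (j + 1) = 0) :
    (fun j ↦ e (J - j)) ∈ (right η ε s J).solutions V := by
  refine ⟨hb, fun j hj ↦ ?_⟩
  simp only [right] at hj ⊢
  have scheme := heq (J - (j + 1)) (by lia) (by lia)
  rw [show J - (j + 1) - 1 = J - (j + 2) by lia, show J - (j + 1) + 1 = J - j by lia] at scheme
  linear_combination (norm := module) scheme

theorem symbol_left {I : ℕ} (hI : 3 ≤ I) {R : ℕ → K} (hbase : R 2 = s)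
    (hrec : ∀ i, 3 ≤ i → i ≤ I - 1 → R i = s + (η ^ 2 - ε ^ 2) / R (i - 1)) (b : K × K) :
    (left η ε s I).symbol b = b.2 * R (I - 1) - b.1 * (η - ε) := by
  change b.2 * (left η ε s I).pivot (I - 3) - b.1 * (η - ε) = _
  rw [pivot_left hbase hrec le_rfl, show I - 3 + 2 = I - 1 by lia]

theorem symbol_right {J : ℕ} (hJ : 3 ≤ J) {R : ℕ → K} (hbase : R (J - 1) = s)
    (hrec : ∀ j, 2 ≤ j → j ≤ J - 2 → R j = s + (η ^ 2 - ε ^ 2) / R (j + 1)) (b : K × K) :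
    (right η ε s J).symbol b = b.2 * R 2 + b.1 * (η + ε) := by
  change b.2 * (right η ε s J).pivot (J - 3) - b.1 * -(η + ε) = _
  rw [pivot_right hbase hrec le_rfl, show J - 1 - (J - 3) = 2 by lia]
  ring

theorem trace_left_shift {I : ℕ} (hI : 3 ≤ I) (b : K × K) (e : ℕ → V) :
    (left η ε s I).trace b (fun i ↦ e (i + 1)) = b.1 • e (I - 1) + b.2 • e I := by
  simp only [trace_apply, left, show I - 3 + 2 + 1 = I by lia]
  rw [show I - 3 + 1 + 1 = I - 1 by lia]

theorem trace_right_reflect {J : ℕ} (hJ : 3 ≤ J) (b : K × K) (e : ℕ → V) :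
    (right η ε s J).trace b (fun j ↦ e (J - j)) = b.1 • e 2 + b.2 • e 1 := by
  simp only [trace_apply, right, show J - (J - 3 + 1) = 2 by lia, show J - (J - 3 + 2) = 1 by lia]

end Subdomain

open Subdomain in
theorem implicit_schwarz_contraction_optimized_general {K V : Type*} [Field K] [AddCommGroup V]
    [Module K V] {I J : ℕ} (hI : 3 ≤ I) (hJ : 3 ≤ J) {α β ε₁ ε₂ η₁ η₂ s₁ s₂ : K} {R₁ R₂ : ℕ → K}
    (hR₁base : R₁ 2 = s₁)
    (hR₁rec : ∀ i, 3 ≤ i → i ≤ I - 1 → R₁ i = s₁ + (η₁ ^ 2 - ε₁ ^ 2) / R₁ (i - 1))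
    (hR₂base : R₂ (J - 1) = s₂)
    (hR₂rec : ∀ j, 2 ≤ j → j ≤ J - 2 → R₂ j = s₂ + (η₂ ^ 2 - ε₂ ^ 2) / R₂ (j + 1))
    (hR₁ne : ∀ i, 2 ≤ i → i ≤ I - 2 → R₁ i ≠ 0)
    (hR₂ne : ∀ j, 3 ≤ j → j ≤ J - 1 → R₂ j ≠ 0)
    (hden₁ : (α + 1) * R₁ (I - 1) + (η₁ - ε₁) ≠ 0)
    (hden₂ : (β - 1) * R₂ 2 + (η₂ + ε₂) ≠ 0)
    {e₁ e₂ : ℕ → ℕ → V}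
    (hb₁ : ∀ m, 1 ≤ m → e₁ m 1 = 0)
    (hb₂ : ∀ m, 1 ≤ m → e₂ m J = 0)
    (heq₁ : ∀ m, 1 ≤ m → ∀ i, 2 ≤ i → i ≤ I - 1 →
      -(η₁ + ε₁) • e₁ m (i - 1) + s₁ • e₁ m i + (η₁ - ε₁) • e₁ m (i + 1) = 0)
    (heq₂ : ∀ m, 1 ≤ m → ∀ j, 2 ≤ j → j ≤ J - 1 →
      -(η₂ + ε₂) • e₂ m (j - 1) + s₂ • e₂ m j + (η₂ - ε₂) • e₂ m (j + 1) = 0)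
    (hint₁ : ∀ m, 1 ≤ m → (e₁ (m + 1) I - e₁ (m + 1) (I - 1)) + α • e₁ (m + 1) I
      = (e₂ m 2 - e₂ m 1) + α • e₂ m 2)
    (hint₂ : ∀ m, 1 ≤ m → (e₂ (m + 1) 2 - e₂ (m + 1) 1) + β • e₂ (m + 1) 1
      = (e₁ m I - e₁ m (I - 1)) + β • e₁ m (I - 1))
    (m : ℕ) (hm : 1 ≤ m) :
    (∀ i, 1 ≤ i → i ≤ I → e₁ (m + 2) i
      = (-(((α + 1) * (η₂ + ε₂) - R₂ 2) * ((β - 1) * (η₁ - ε₁) - R₁ (I - 1)))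
          / (((α + 1) * R₁ (I - 1) + (η₁ - ε₁)) * ((β - 1) * R₂ 2 + (η₂ + ε₂)))) • e₁ m i) ∧
    (∀ j, 1 ≤ j → j ≤ J → e₂ (m + 2) j
      = (-(((α + 1) * (η₂ + ε₂) - R₂ 2) * ((β - 1) * (η₁ - ε₁) - R₁ (I - 1)))
          / (((α + 1) * R₁ (I - 1) + (η₁ - ε₁)) * ((β - 1) * R₂ 2 + (η₂ + ε₂)))) • e₂ m j) := by
  let S := left η₁ ε₁ s₁ I
  let T := right η₂ ε₂ s₂ J
  have symbol_S : ∀ b, S.symbol b = b.2 * R₁ (I - 1) - b.1 * (η₁ - ε₁) :=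
    symbol_left hI hR₁base hR₁rec
  have symbol_T : ∀ b, T.symbol b = b.2 * R₂ 2 + b.1 * (η₂ + ε₂) :=
    symbol_right hJ hR₂base hR₂rec
  have pivot_S_ne : ∀ i < S.n, S.pivot i ≠ 0 := fun _ ↦
    pivot_left_ne_zero hR₁base hR₁rec hR₁ne
  have pivot_T_ne : ∀ j < T.n, T.pivot j ≠ 0 := fun _ ↦
    pivot_right_ne_zero hR₂base hR₂rec hR₂ne
  have imposed_S_ne : S.symbol (-1, α + 1) ≠ 0 := by
    simpa only [symbol_S, neg_mul, one_mul, sub_neg_eq_add] using hden₁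
  have imposed_T_ne : T.symbol (1, β - 1) ≠ 0 := by
    simpa only [symbol_T, one_mul] using hden₂
  have mem_S (m) (hm : 1 ≤ m) : (fun i ↦ e₁ m (i + 1)) ∈ S.solutions V :=
    shift_mem_solutions_left hI (hb₁ m hm) (heq₁ m hm)
  have mem_T (m) (hm : 1 ≤ m) : (fun j ↦ e₂ m (J - j)) ∈ T.solutions V :=
    reflect_mem_solutions_right hJ (hb₂ m hm) (heq₂ m hm)
  have interface_S (m) (hm : 1 ≤ m) : S.trace (-1, α + 1) (fun i ↦ e₁ (m + 1) (i + 1))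
      = T.trace (α + 1, -1) (fun j ↦ e₂ m (J - j)) := by
    rw [trace_left_shift hI, trace_right_reflect hJ]
    linear_combination (norm := module) hint₁ m hm
  have interface_T (m) (hm : 1 ≤ m) : T.trace (1, β - 1) (fun j ↦ e₂ (m + 1) (J - j))
      = S.trace (β - 1, 1) (fun i ↦ e₁ m (i + 1)) := by
    rw [trace_left_shift hI, trace_right_reflect hJ]
    linear_combination (norm := module) hint₂ m hm
  constructor
  · intro i hi₁ hiI
    have := eq_smul_of_two_solves pivot_S_ne pivot_T_ne imposed_S_ne imposed_T_ne (mem_S m hm)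
      (mem_T (m + 1) (by lia)) (mem_S (m + 2) (by lia)) (interface_T m hm)
      (interface_S (m + 1) (by lia)) (i := i - 1) (show i - 1 ≤ I - 3 + 2 by lia)
    simp only [symbol_S, symbol_T, Nat.sub_add_cancel hi₁] at this
    convert this using 3 <;> ring
  · intro j hj₁ hjJ
    have := eq_smul_of_two_solves pivot_T_ne pivot_S_ne imposed_T_ne imposed_S_ne (mem_T m hm)
      (mem_S (m + 1) (by lia)) (mem_T (m + 2) (by lia)) (interface_S m hm)
      (interface_T (m + 1) (by lia)) (i := J - j) (show J - j ≤ J - 3 + 2 by lia)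
    simp only [symbol_S, symbol_T, Nat.sub_sub_self hjJ] at this
    convert this using 3 <;> ring

/-- Contraction factor of the implicit Schwarz iteration with optimized (Robin-type)
interface conditions with parameters `α, β` for two coupled linear
advection–diffusion–reaction equations. -/
theorem implicit_schwarz_contraction_optimized
    (I J : ℕ) (hI : 3 ≤ I) (hJ : 3 ≤ J) (α β : ℝ)
    (ε₁ ε₂ η₁ η₂ γ₁ γ₂ : ℝ)
    (R₁ R₂ : ℕ → ℝ)
    (hR₁base : R₁ 2 = 1 + 2 * ε₁ + γ₁)
    (hR₁rec : ∀ i : ℕ, 3 ≤ i → i ≤ I - 1 →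
      R₁ i = 1 + 2 * ε₁ + γ₁ + (η₁ ^ 2 - ε₁ ^ 2) / R₁ (i - 1))
    (hR₂base : R₂ (J - 1) = 1 + 2 * ε₂ + γ₂)
    (hR₂rec : ∀ j : ℕ, 2 ≤ j → j ≤ J - 2 →
      R₂ j = 1 + 2 * ε₂ + γ₂ + (η₂ ^ 2 - ε₂ ^ 2) / R₂ (j + 1))
    (hR₁ne : ∀ i : ℕ, 2 ≤ i → i ≤ I - 1 → R₁ i ≠ 0)
    (hR₂ne : ∀ j : ℕ, 2 ≤ j → j ≤ J - 1 → R₂ j ≠ 0)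
    (hden₁ : (α + 1) * R₁ (I - 1) + (η₁ - ε₁) ≠ 0)
    (hden₂ : (β - 1) * R₂ 2 + (η₂ + ε₂) ≠ 0)
    (e₁ e₂ : ℕ → ℕ → ℝ)
    (hb₁ : ∀ m : ℕ, 1 ≤ m → e₁ m 1 = 0)
    (hb₂ : ∀ m : ℕ, 1 ≤ m → e₂ m J = 0)
    (heq₁ : ∀ m : ℕ, 1 ≤ m → ∀ i : ℕ, 2 ≤ i → i ≤ I - 1 →
      -(η₁ + ε₁) * e₁ m (i - 1) + (1 + 2 * ε₁ + γ₁) * e₁ m i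
        + (η₁ - ε₁) * e₁ m (i + 1) = 0)
    (heq₂ : ∀ m : ℕ, 1 ≤ m → ∀ j : ℕ, 2 ≤ j → j ≤ J - 1 →
      -(η₂ + ε₂) * e₂ m (j - 1) + (1 + 2 * ε₂ + γ₂) * e₂ m j
        + (η₂ - ε₂) * e₂ m (j + 1) = 0)
    (hint₁ : ∀ m : ℕ,
      (e₁ (m + 1) I - e₁ (m + 1) (I - 1)) + α * e₁ (m + 1) I
        = (e₂ m 2 - e₂ m 1) + α * e₂ m 2)
    (hint₂ : ∀ m : ℕ,
      (e₂ (m + 1) 2 - e₂ (m + 1) 1) + β * e₂ (m + 1) 1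
        = (e₁ m I - e₁ m (I - 1)) + β * e₁ m (I - 1)) :
    ∀ m : ℕ, 1 ≤ m →
      (∀ i : ℕ, 1 ≤ i → i ≤ I →
        e₁ (m + 2) i
          = -(((α + 1) * (η₂ + ε₂) - R₂ 2) * ((β - 1) * (η₁ - ε₁) - R₁ (I - 1)))
              / (((α + 1) * R₁ (I - 1) + (η₁ - ε₁)) * ((β - 1) * R₂ 2 + (η₂ + ε₂)))
              * e₁ m i) ∧
      (∀ j : ℕ, 1 ≤ j → j ≤ J →
        e₂ (m + 2) j
          = -(((α + 1) * (η₂ + ε₂) - R₂ 2) * ((β - 1) * (η₁ - ε₁) - R₁ (I - 1)))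
              / (((α + 1) * R₁ (I - 1) + (η₁ - ε₁)) * ((β - 1) * R₂ 2 + (η₂ + ε₂)))
              * e₂ m j) := by
  simpa only [smul_eq_mul] using implicit_schwarz_contraction_optimized_general hI hJ hR₁base hR₁rec
    hR₂base hR₂rec (fun i h₂ hi ↦ hR₁ne i h₂ (by lia)) (fun j h₃ hj ↦ hR₂ne j (by lia) hj)
    hden₁ hden₂ hb₁ hb₂ heq₁ heq₂ (fun m _ ↦ hint₁ m) (fun m _ ↦ hint₂ m)
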